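/- arXiv:2012.07369 — 3 statements merged into one kernel-verified Lean document; each statement's English description precedes it below -/
import Mathlib

section
/- (Lemma 2 of the paper.) Let κ be a Markov kernel on ℝⁿ whose transition density is bounded by φ̄ ≥ 0, let s₀ ∈ ℝⁿ, and let P be the law on the path space ℕ → ℝⁿ of the Markov chain (s_k) started at s₀ with transition kernel κ (given by the Ionescu–Tulcea construction). Then for every measurable set A ⊆ ℝⁿ, the probability that the whole trajectory remains in A satisfies P[ s_k ∈ A for all k ≥ 1 ] ≤ φ̄ · vol(A). -/
open MeasureTheory ProbabilityTheory

theorem bind_le_measure_univ_smul {α β : Type*} [MeasurableSpace α] [MeasurableSpace β]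
    {m : Measure α} {f : α → Measure β} {μ : Measure β} (hf : ∀ᵐ x ∂m, f x ≤ μ) :
    m.bind f ≤ m Set.univ • μ := by
  refine Measure.le_iff.2 fun B hB => ?_
  calc m.bind f B
      ≤ ∫⁻ x, f x B ∂m := Measure.bind_apply_le f hB
    _ ≤ ∫⁻ _, μ B ∂m := lintegral_mono_ae (hf.mono fun _ hx => hx B)
    _ = (m Set.univ • μ) B := by
        rw [lintegral_const, Measure.smul_apply, smul_eq_mul, mul_comm]

theorem prob_traj_mem_le_of_kernel_density_bounded_general {E : Type*} [MeasurableSpace E]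
    {κ : Kernel E E} {μ : Measure E} (hκ : ∀ x, κ x ≤ μ)
    {P : Measure (ℕ → E)} [IsProbabilityMeasure P]
    (hP : P.map (fun ω => ω 1) = (P.map (fun ω => ω 0)).bind κ) (A : Set E) :
    P {ω | ∀ k : ℕ, 1 ≤ k → ω k ∈ A} ≤ μ A := by
  have coord (k : ℕ) : AEMeasurable (fun ω : ℕ → E => ω k) P := (measurable_pi_apply k).aemeasurable
  have := Measure.isProbabilityMeasure_map (coord 0)
  calc P {ω | ∀ k : ℕ, 1 ≤ k → ω k ∈ A}
      ≤ P ((fun ω => ω 1) ⁻¹' A) := measure_mono fun ω hω => hω 1 le_rfl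
    _ ≤ P.map (fun ω => ω 1) A := Measure.le_map_apply (coord 1) A
    _ = (P.map (fun ω => ω 0)).bind κ A := by rw [hP]
    _ ≤ (P.map (fun ω => ω 0) Set.univ • μ) A := bind_le_measure_univ_smul (.of_forall hκ) A
    _ = μ A := by rw [measure_univ, one_smul]

/-- Lemma 2 of the paper. Let `κ` be a Markov kernel on `ℝⁿ` with
transition density bounded by `φbar`, and let `P` be the law on the path space `ℕ → ℝⁿ`
of the Markov chain started at `s₀` with kernel `κ` (as given by the Ionescu–Tulcea
construction, characterized here by its one-dimensional marginals: the time-`0` marginal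
is `dirac s₀` and the time-`(k+1)` marginal is the time-`k` marginal composed with `κ`).
Then for every measurable set `A`, the probability that the whole trajectory remains in
`A` is at most `φbar * vol A`. -/
theorem prob_traj_mem_le_of_kernel_density_bounded
    (n : ℕ) (κ : Kernel (EuclideanSpace ℝ (Fin n)) (EuclideanSpace ℝ (Fin n)))
    [IsMarkovKernel κ] (φbar : ℝ) (hφbar : 0 ≤ φbar)
    (hκ : ∀ (x : EuclideanSpace ℝ (Fin n)) (B : Set (EuclideanSpace ℝ (Fin n))),
      MeasurableSet B → κ x B ≤ ENNReal.ofReal φbar * volume B)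
    (s₀ : EuclideanSpace ℝ (Fin n))
    (P : Measure (ℕ → EuclideanSpace ℝ (Fin n))) [IsProbabilityMeasure P]
    (hP0 : P.map (fun ω => ω 0) = Measure.dirac s₀)
    (hPsucc : ∀ k : ℕ,
      P.map (fun ω => ω (k + 1)) = (P.map (fun ω => ω k)).bind (fun x => κ x))
    (A : Set (EuclideanSpace ℝ (Fin n))) (hA : MeasurableSet A) :
    P {ω : ℕ → EuclideanSpace ℝ (Fin n) | ∀ k : ℕ, 1 ≤ k → ω k ∈ A} ≤
      ENNReal.ofReal φbar * volume A := by
  have hκ_le (x : EuclideanSpace ℝ (Fin n)) : κ x ≤ ENNReal.ofReal φbar • volume :=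
    Measure.le_iff.2 (hκ x)
  exact prob_traj_mem_le_of_kernel_density_bounded_general hκ_le (hPsucc 0) A
end

section
/- (Cross-update decrease of the joint Lyapunov candidate; key inequality in the proof of Theorem 5 of the paper.) Let Θ be a normed vector space, θ_p, θ_{p+1}, θ⋆ ∈ Θ, and r ∈ (0,1) with ‖θ_{p+1} − θ⋆‖ ≤ r‖θ_p − θ⋆‖. Let S be a set, α_V > 0, and let V_p, V_{p+1} : S → ℝ satisfy V_{p+1}(s) − V_p(s) ≤ α_V‖θ_{p+1} − θ_p‖ for all s ∈ S. Then for every ζ ≥ α_V(r+1)/(1−r) and every s ∈ S: V_{p+1}(s) + ζ‖θ_{p+1} − θ⋆‖ ≤ V_p(s) + ζ‖θ_p − θ⋆‖. -/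
/-!
Write `e` and `e'` for the distances from the parameter to `θ⋆` before and after the update. Since
`(1 + r) (e - e') - (1 - r) (e + e') = 2 (r e - e')`, the contraction `e' ≤ r e` and the triangle
inequality bound the length of the update by `(r + 1) / (1 - r)` times the decrease `e - e'`. This
factor is the threshold for `ζ`: the term `ζ e` then decreases by at least `α_V` times the length of
the update, which pays for the growth of the value function.
-/

lemma dist_le_div_mul_dist_sub_dist {X : Type*} [PseudoMetricSpace X] {x y z : X} {r : ℝ}
    (hr : r < 1) (hcontr : dist y z ≤ r * dist x z) :
    dist y x ≤ (r + 1) / (1 - r) * (dist x z - dist y z) := by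
  have hr' : 0 < 1 - r := sub_pos.mpr hr
  rw [div_mul_eq_mul_div, le_div_iff₀' hr']
  calc (1 - r) * dist y x ≤ (1 - r) * (dist y z + dist x z) :=
        mul_le_mul_of_nonneg_left (dist_triangle_right y x z) hr'.le
    _ ≤ (r + 1) * (dist x z - dist y z) := by linarith

theorem joint_lyapunov_cross_update_decrease_general {Θ S : Type*} [PseudoMetricSpace Θ]
    {θ θ' θstar : Θ} {r : ℝ} (hr : r < 1) (hcontr : dist θ' θstar ≤ r * dist θ θstar)
    {α : ℝ} (hα : 0 ≤ α) {V V' : S → ℝ} (hV : ∀ s, V' s - V s ≤ α * dist θ' θ)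
    {ζ : ℝ} (hζ : α * (r + 1) / (1 - r) ≤ ζ) (s : S) :
    V' s + ζ * dist θ' θstar ≤ V s + ζ * dist θ θstar := by
  have hdecrease : 0 ≤ dist θ θstar - dist θ' θstar :=
    sub_nonneg.mpr (hcontr.trans (mul_le_of_le_one_left dist_nonneg hr.le))
  have hgrowth : V' s - V s ≤ ζ * (dist θ θstar - dist θ' θstar) :=
    calc V' s - V s ≤ α * dist θ' θ := hV s
      _ ≤ α * ((r + 1) / (1 - r) * (dist θ θstar - dist θ' θstar)) :=
        mul_le_mul_of_nonneg_left (dist_le_div_mul_dist_sub_dist hr hcontr) hα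
      _ = α * (r + 1) / (1 - r) * (dist θ θstar - dist θ' θstar) := by ring
      _ ≤ ζ * (dist θ θstar - dist θ' θstar) := mul_le_mul_of_nonneg_right hζ hdecrease
  linarith

/-- cross-update decrease of the joint Lyapunov candidate; key
inequality in the proof of Theorem 5 of the paper. Under the linear-convergence
assumption on the parameters and the Lipschitz-type regularity of the value functions,
for every `ζ ≥ α_V (r + 1) / (1 - r)` the joint Lyapunov candidate
`W p (s) = V p (s) + ζ ‖θ p − θ⋆‖` does not increase across a parameter update. -/
theorem joint_lyapunov_cross_update_decrease
    {Θ : Type*} [NormedAddCommGroup Θ] [NormedSpace ℝ Θ]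
    (θp θp1 θstar : Θ) (r : ℝ) (hr0 : 0 < r) (hr1 : r < 1)
    (hconv : ‖θp1 - θstar‖ ≤ r * ‖θp - θstar‖)
    {S : Type*} (αV : ℝ) (hαV : 0 < αV)
    (Vp Vp1 : S → ℝ)
    (hreg : ∀ s : S, Vp1 s - Vp s ≤ αV * ‖θp1 - θp‖)
    (ζ : ℝ) (hζ : αV * (r + 1) / (1 - r) ≤ ζ) :
    ∀ s : S, Vp1 s + ζ * ‖θp1 - θstar‖ ≤ Vp s + ζ * ‖θp - θstar‖ := by
  simp only [← dist_eq_norm] at hconv hreg ⊢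
  exact joint_lyapunov_cross_update_decrease_general hr1 hconv hαV.le hreg hζ
end

section
/- (Strict decrease at an update step; inequality (39)–(42) in the proof of Theorem 5 of the paper.) Let Θ be a normed vector space, θ_p, θ_{p+1}, θ⋆ ∈ Θ, and r ∈ (0,1) with ‖θ_{p+1} − θ⋆‖ ≤ r‖θ_p − θ⋆‖. Let S be a set, α_V > 0, and let V_p, V_{p+1} : S → ℝ satisfy V_{p+1}(s) − V_p(s) ≤ α_V‖θ_{p+1} − θ_p‖ for all s ∈ S. Let ζ ≥ α_V(r+1)/(1−r). If s_i, s_{i+1} ∈ S satisfy V_{p+1}(s_{i+1}) < V_{p+1}(s_i), then V_{p+1}(s_{i+1}) + ζ‖θ_{p+1} − θ⋆‖ < V_p(s_i) + ζ‖θ_p − θ⋆‖, i.e. the joint Lyapunov candidate strictly decreases across the parameter update. -/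
/-! With `d` the distance from the old parameter to `θ⋆`, an update moves the parameter by at most
`(1 + r) d` and brings it closer to `θ⋆` by at least `(1 - r) d`. The weight `α (r + 1) / (1 - r)`
is the one at which the second effect pays for the change of the value function caused by the
first, so the update itself does not increase the joint candidate at a fixed state; the strict
decrease comes from the transition under the new value function. -/

/-- The joint Lyapunov candidate `W(s) = V(s) + ζ d(θ, θ⋆)` in the state and the parameter. The
parameter space only carries a distance, which is `‖θ - θ⋆‖` in the normed setting. -/
def jointLyapunov {Θ S : Type*} [PseudoMetricSpace Θ] (ζ : ℝ) (θstar : Θ) (V : S → ℝ) (θ : Θ)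
    (s : S) : ℝ :=
  V s + ζ * dist θ θstar

section ParameterUpdate

variable {Θ : Type*} [PseudoMetricSpace Θ] {θ θ' θstar : Θ} {r α ζ : ℝ}

theorem dist_le_add_one_mul_dist_of_dist_le_mul_dist
    (hconv : dist θ' θstar ≤ r * dist θ θstar) :
    dist θ' θ ≤ (r + 1) * dist θ θstar :=
  calc
    dist θ' θ ≤ dist θ' θstar + dist θ θstar := dist_triangle_right θ' θ θstar
    _ ≤ r * dist θ θstar + dist θ θstar := by gcongr
    _ = (r + 1) * dist θ θstar := by ring

theorem mul_dist_le_mul_dist_sub_dist (hr : r < 1) (hα : 0 ≤ α)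
    (hζ : α * (r + 1) / (1 - r) ≤ ζ) (hconv : dist θ' θstar ≤ r * dist θ θstar) :
    α * dist θ' θ ≤ ζ * (dist θ θstar - dist θ' θstar) := by
  have hmove : dist θ' θ ≤ (r + 1) * dist θ θstar :=
    dist_le_add_one_mul_dist_of_dist_le_mul_dist hconv
  obtain hzero | hpos := (dist_nonneg (x := θ) (y := θstar)).eq_or_lt'
  · have hzero' : dist θ' θstar = 0 := le_antisymm (by simpa [hzero] using hconv) dist_nonneg
    have hstill : dist θ' θ = 0 := le_antisymm (by simpa [hzero] using hmove) dist_nonneg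
    simp [hzero, hzero', hstill]
  · have hr0 : 0 ≤ r := nonneg_of_mul_nonneg_left (dist_nonneg.trans hconv) hpos
    have hgap : 0 < 1 - r := sub_pos.mpr hr
    have hζ0 : 0 ≤ ζ := le_trans (by positivity) hζ
    have hweight : α * (r + 1) ≤ ζ * (1 - r) := (div_le_iff₀ hgap).mp hζ
    calc
      α * dist θ' θ ≤ α * ((r + 1) * dist θ θstar) := by gcongr
      _ = α * (r + 1) * dist θ θstar := by ring
      _ ≤ ζ * (1 - r) * dist θ θstar := by gcongr
      _ = ζ * (dist θ θstar - r * dist θ θstar) := by ring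
      _ ≤ ζ * (dist θ θstar - dist θ' θstar) := by gcongr

variable {S : Type*} {V V' : S → ℝ} {s s' : S}

theorem jointLyapunov_update_le (hr : r < 1) (hα : 0 ≤ α)
    (hζ : α * (r + 1) / (1 - r) ≤ ζ) (hconv : dist θ' θstar ≤ r * dist θ θstar)
    (hreg : V' s - V s ≤ α * dist θ' θ) :
    jointLyapunov ζ θstar V' θ' s ≤ jointLyapunov ζ θstar V θ s := by
  have hpay : α * dist θ' θ ≤ ζ * (dist θ θstar - dist θ' θstar) :=
    mul_dist_le_mul_dist_sub_dist hr hα hζ hconv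
  unfold jointLyapunov
  linarith

theorem joint_lyapunov_strict_decrease_at_update_general (hr : r < 1) (hα : 0 ≤ α)
    (hζ : α * (r + 1) / (1 - r) ≤ ζ) (hconv : dist θ' θstar ≤ r * dist θ θstar)
    (hreg : V' s - V s ≤ α * dist θ' θ) (hdec : V' s' < V' s) :
    jointLyapunov ζ θstar V' θ' s' < jointLyapunov ζ θstar V θ s :=
  calc
    jointLyapunov ζ θstar V' θ' s' < jointLyapunov ζ θstar V' θ' s := by
      unfold jointLyapunov
      gcongr
    _ ≤ jointLyapunov ζ θstar V θ s := jointLyapunov_update_le hr hα hζ hconv hreg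

end ParameterUpdate

/-- strict decrease at an update step; inequalities (39)–(42) in the
proof of Theorem 5 of the paper. Under the linear-convergence assumption on the
parameters and the Lipschitz-type regularity of the value functions, with
`ζ ≥ α_V (r + 1) / (1 - r)`, if the new value function strictly decreases along the
transition `s_i → s_{i+1}`, then the joint Lyapunov candidate strictly decreases
across the parameter update. -/
theorem joint_lyapunov_strict_decrease_at_update
    {Θ : Type*} [NormedAddCommGroup Θ] [NormedSpace ℝ Θ]
    (θp θp1 θstar : Θ) (r : ℝ) (hr0 : 0 < r) (hr1 : r < 1)
    (hconv : ‖θp1 - θstar‖ ≤ r * ‖θp - θstar‖)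
    {S : Type*} (αV : ℝ) (hαV : 0 < αV)
    (Vp Vp1 : S → ℝ)
    (hreg : ∀ s : S, Vp1 s - Vp s ≤ αV * ‖θp1 - θp‖)
    (ζ : ℝ) (hζ : αV * (r + 1) / (1 - r) ≤ ζ)
    (si si1 : S) (hdec : Vp1 si1 < Vp1 si) :
    Vp1 si1 + ζ * ‖θp1 - θstar‖ < Vp si + ζ * ‖θp - θstar‖ := by
  simp only [← dist_eq_norm] at hconv hreg ⊢
  exact joint_lyapunov_strict_decrease_at_update_general hr1 hαV.le hζ hconv (hreg si) hdec
end
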